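/- For every instance of interval selection with proportional weights, every prediction assignment, and every maximum-weight feasible set OPT, the solution produced by algorithm Naive satisfies ALG ≥ OPT − η, where η is the total prediction error relative to OPT. -/

import Mathlib

attribute [local instance] Classical.propDecidable

noncomputable section

/-- An interval `I = (s, f)` with `s < f`, occupying `[s, f)`. -/
structure Ivl where
  s : ℝ
  f : ℝ
  lt : s < f

namespace Ivl

/-- The set of points occupied by an interval: the half-open set `[s, f)`. -/
def occ (I : Ivl) : Set ℝ := Set.Ico I.s I.f

/-- The length of an interval, `f - s` (also its proportional weight). -/
def len (I : Ivl) : ℝ := I.f - I.s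

end Ivl

/-- Two intervals conflict if their occupied sets intersect. -/
def Conflict (I J : Ivl) : Prop := (I.occ ∩ J.occ).Nonempty

/-- A set of intervals is feasible if its elements are pairwise disjoint. -/
def Feasible (S : Finset Ivl) : Prop :=
  ∀ I ∈ S, ∀ J ∈ S, I ≠ J → ¬ Conflict I J

/-- `opt` is a maximum-cardinality feasible subset of the instance's intervals. -/
def IsMaxCardOpt (inst : List Ivl) (opt : Finset Ivl) : Prop :=
  (∀ I ∈ opt, I ∈ inst) ∧ Feasible opt ∧
    ∀ T : Finset Ivl, (∀ I ∈ T, I ∈ inst) → Feasible T → T.card ≤ opt.card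

/-- The prediction error introduced by interval `I`, relative to `opt`,
with weight function `w`. -/
def err (w : Ivl → ℝ) (opt : Finset Ivl) (Prd : Ivl → Bool) (I : Ivl) : ℝ :=
  if (Prd I = true ↔ I ∈ opt) then 0
  else if I ∈ opt then w I
  else (∑ J ∈ opt.filter (fun J => Conflict J I), w J) - w I

/-- The total prediction error of the instance relative to `opt`. -/
def totalErr (w : Ivl → ℝ) (opt : Finset Ivl) (Prd : Ivl → Bool)
    (inst : List Ivl) : ℝ :=
  (inst.map (err w opt Prd)).sum

/-- The total (proportional) weight of a finite set of intervals. -/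
def wsum (S : Finset Ivl) : ℝ := ∑ I ∈ S, I.len

/-- `opt` is a maximum-weight feasible subset of the instance's intervals,
for proportional weights. -/
def IsMaxWeightOpt (inst : List Ivl) (opt : Finset Ivl) : Prop :=
  (∀ I ∈ opt, I ∈ inst) ∧ Feasible opt ∧
    ∀ T : Finset Ivl, (∀ I ∈ T, I ∈ inst) → Feasible T → wsum T ≤ wsum opt

/-- One step of algorithm `Naive`: accept `I` iff it is predicted optimal
and conflicts with nothing in the current solution. -/
def naiveStep (Prd : Ivl → Bool) (S : Finset Ivl) (I : Ivl) : Finset Ivl :=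
  if Prd I = true ∧ ∀ J ∈ S, ¬ Conflict I J then insert I S else S

/-- Algorithm `Naive` run on the whole instance, in order. -/
def naive (Prd : Ivl → Bool) (inst : List Ivl) : Finset Ivl :=
  inst.foldl (naiveStep Prd) ∅

lemma naive_aux (Prd : Ivl → Bool) (l : List Ivl) : ∀ S : Finset Ivl,
    (S ⊆ l.foldl (naiveStep Prd) S) ∧
    (∀ I ∈ l.foldl (naiveStep Prd) S, I ∈ S ∨ (I ∈ l ∧ Prd I = true)) ∧
    (∀ J ∈ l, Prd J = true → J ∈ l.foldl (naiveStep Prd) S ∨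
      ∃ I ∈ l.foldl (naiveStep Prd) S, Conflict J I) := by
  induction l with
  | nil => intro S; simp
  | cons a l ih =>
    intro S
    obtain ⟨h1, h2, h3⟩ := ih (naiveStep Prd S a)
    simp only [List.foldl_cons]
    have hsub : S ⊆ naiveStep Prd S a := by
      unfold naiveStep
      split_ifs
      · exact Finset.subset_insert _ _
      · exact Finset.Subset.refl _
    refine ⟨hsub.trans h1, ?_, ?_⟩
    · intro I hI
      rcases h2 I hI with h | ⟨h, h'⟩
      · unfold naiveStep at h
        split_ifs at h with hc
        · rcases Finset.mem_insert.1 h with rfl | h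
          · exact Or.inr ⟨by simp, hc.1⟩
          · exact Or.inl h
        · exact Or.inl h
      · exact Or.inr ⟨List.mem_cons_of_mem _ h, h'⟩
    · intro J hJ hp
      rcases List.mem_cons.1 hJ with rfl | hJ
      · by_cases hc : ∀ I ∈ S, ¬ Conflict J I
        · left
          apply h1
          unfold naiveStep
          rw [if_pos ⟨hp, hc⟩]
          exact Finset.mem_insert_self _ _
        · right
          push Not at hc
          obtain ⟨I, hI, hI'⟩ := hc
          exact ⟨I, h1 (hsub hI), hI'⟩
      · exact h3 J hJ hp

lemma conflict_symm {I J : Ivl} (h : Conflict I J) : Conflict J I := by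
  unfold Conflict at *
  rwa [Set.inter_comm]

lemma len_nonneg' (I : Ivl) : 0 ≤ I.len := by
  have := I.lt
  unfold Ivl.len
  linarith

lemma exchange (inst : List Ivl) (opt : Finset Ivl) (hopt : IsMaxWeightOpt inst opt)
    (I : Ivl) (hI : I ∈ inst) (hIo : I ∉ opt) :
    I.len ≤ ∑ J ∈ opt.filter (fun J => Conflict J I), J.len := by
  obtain ⟨h1, h2, h3⟩ := hopt
  have := h3 (insert I (opt.filter (fun J => ¬ Conflict J I))) ?_ ?_
  · unfold wsum at this
    rw [Finset.sum_insert (by simp [hIo]),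
      ← Finset.sum_filter_add_sum_filter_not opt (fun J => Conflict J I)] at this
    linarith
  · intro K hK
    rcases Finset.mem_insert.1 hK with rfl | hK
    · exact hI
    · exact h1 _ (Finset.mem_filter.1 hK).1
  · intro K hK L hL hne
    rcases Finset.mem_insert.1 hK with rfl | hK <;> rcases Finset.mem_insert.1 hL with rfl | hL
    · exact absurd rfl hne
    · exact fun h => (Finset.mem_filter.1 hL).2 (conflict_symm h)
    · exact (Finset.mem_filter.1 hK).2
    · exact h2 _ (Finset.mem_filter.1 hK).1 _ (Finset.mem_filter.1 hL).1 hne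

lemma err_nonneg (inst : List Ivl) (opt : Finset Ivl) (hopt : IsMaxWeightOpt inst opt)
    (Prd : Ivl → Bool) (I : Ivl) (hI : I ∈ inst) : 0 ≤ err Ivl.len opt Prd I := by
  unfold err
  split_ifs with h h'
  · exact le_rfl
  · exact len_nonneg' I
  · have := exchange inst opt hopt I hI h'
    linarith

theorem naive_proportional_performance
    (inst : List Ivl) (hdist : inst.Nodup) (Prd : Ivl → Bool)
    (opt : Finset Ivl) (hopt : IsMaxWeightOpt inst opt) :
    wsum (naive Prd inst) ≥ wsum opt - totalErr Ivl.len opt Prd inst := by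
  classical
  obtain ⟨-, h2, h3⟩ := naive_aux Prd inst ∅
  change ∀ I ∈ naive Prd inst, _ at h2
  change ∀ J ∈ inst, Prd J = true → J ∈ naive Prd inst ∨ ∃ I ∈ naive Prd inst, _ at h3
  generalize naive Prd inst = S at h2 h3
  have hS : ∀ I ∈ S, I ∈ inst ∧ Prd I = true := fun I hI => by simpa using h2 I hI
  have htot : totalErr Ivl.len opt Prd inst = ∑ I ∈ inst.toFinset, err Ivl.len opt Prd I := by
    unfold totalErr
    rw [List.sum_toFinset _ hdist]
  have hge : ∑ I ∈ opt ∪ (S \ opt), err Ivl.len opt Prd I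
      ≤ ∑ I ∈ inst.toFinset, err Ivl.len opt Prd I := by
    apply Finset.sum_le_sum_of_subset_of_nonneg
    · intro I hI
      rw [List.mem_toFinset]
      rcases Finset.mem_union.1 hI with h | h
      · exact hopt.1 _ h
      · exact (hS I (Finset.mem_sdiff.1 h).1).1
    · intro I hI _
      exact err_nonneg inst opt hopt Prd I (List.mem_toFinset.1 hI)
  rw [Finset.sum_union Finset.disjoint_sdiff] at hge
  have e1 : ∑ I ∈ S \ opt, err Ivl.len opt Prd I =
      ∑ I ∈ S \ opt, ((∑ J ∈ opt, if Conflict J I then J.len else 0) - I.len) := by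
    apply Finset.sum_congr rfl
    intro I hI
    obtain ⟨ha, hb⟩ := Finset.mem_sdiff.1 hI
    unfold err
    rw [if_neg (by simp [hb, (hS I ha).2]), if_neg hb, Finset.sum_filter]
  rw [Finset.sum_sub_distrib, Finset.sum_comm] at e1
  have e2 : wsum S = ∑ J ∈ opt, (if J ∈ S then J.len else 0) + ∑ I ∈ S \ opt, I.len := by
    unfold wsum
    rw [← Finset.sum_filter, Finset.filter_mem_eq_inter, Finset.inter_comm,
      Finset.sum_inter_add_sum_sdiff]
  have key : wsum opt ≤ ∑ J ∈ opt, ((if J ∈ S then J.len else 0) + err Ivl.len opt Prd J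
      + ∑ I ∈ S \ opt, if Conflict J I then J.len else 0) := by
    unfold wsum
    apply Finset.sum_le_sum
    intro J hJ
    have n1 : 0 ≤ (if J ∈ S then J.len else 0) := by
      split_ifs
      · exact len_nonneg' J
      · exact le_rfl
    have n2 := err_nonneg inst opt hopt Prd J (hopt.1 _ hJ)
    have n3' : ∀ I ∈ S \ opt, 0 ≤ (if Conflict J I then J.len else 0) := by
      intro I _
      split_ifs
      · exact len_nonneg' J
      · exact le_rfl
    have n3 := Finset.sum_nonneg n3'
    by_cases hJS : J ∈ S
    · rw [if_pos hJS]
      linarith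
    · by_cases hp : Prd J = true
      · rcases h3 J (hopt.1 _ hJ) hp with h | ⟨I, hI, hc⟩
        · exact absurd h hJS
        · have hIo : I ∉ opt := fun h =>
            hopt.2.1 J hJ I h (fun e => hJS (e ▸ hI)) hc
          have := Finset.single_le_sum n3' (Finset.mem_sdiff.2 ⟨hI, hIo⟩)
          rw [if_pos hc] at this
          linarith
      · have : err Ivl.len opt Prd J = J.len := by
          unfold err
          rw [if_neg (by simp [hJ, hp]), if_pos hJ]
        linarith
  rw [Finset.sum_add_distrib, Finset.sum_add_distrib] at key
  linarith
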